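/- arXiv:2211.04962 — 4 statements merged into one kernel-verified Lean document; each statement's English description precedes it below -/
import Mathlib

section
/- Let Λ and Γ be finite dimensional algebras over a field K. Then the K-algebra (Λ/rad Λ) ⊗ (Γ/rad Γ) is semisimple if and only if rad(Λ⊗Γ) = rad Λ ⊗ Γ + Λ ⊗ rad Γ as an ideal of Λ⊗Γ. -/
open TensorProduct

/-!
A surjective ring homomorphism `f : S → T` whose kernel lies in `rad S`, where `S / rad S` is
semisimple, has semisimple target exactly when `ker f = rad S`. This is applied to
`p ⊗ q : Λ ⊗ Γ → A ⊗ B`, whose kernel is `ker p ⊗ Γ + Λ ⊗ ker q` by right exactness.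

The kernel lies in the radical because it is nilpotent, a fact about the semiring of `R`-submodules
of `Λ ⊗ Γ`: its two summands are the products `ker p · Γ` and `Λ · ker q`, the four factors commute
pairwise, and a sum of commuting nilpotent elements of a semiring is nilpotent.
-/

section Ring

variable {S T : Type*} [Ring S] [Ring T]

theorem le_jacobson_of_forall_isNilpotent {I : Ideal S} (hI : ∀ x ∈ I, IsNilpotent x) :
    I ≤ Ring.jacobson S := by
  intro x hx
  rw [← Ideal.jacobson_bot, Ideal.mem_jacobson_iff]
  intro y
  obtain ⟨u, hu⟩ := (hI _ (I.mul_mem_left y hx)).isUnit_add_one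
  refine ⟨(↑u⁻¹ : S), ?_⟩
  have hinv : (↑u⁻¹ : S) * (y * x + 1) = 1 := by rw [← hu, Units.inv_mul]
  rw [mul_assoc, ← mul_add_one, hinv, sub_self]
  exact zero_mem _

theorem isSemisimpleRing_iff_jacobson_eq_ker [IsSemisimpleRing (S ⧸ Ring.jacobson S)]
    {f : S →+* T} (hf : Function.Surjective f) (hker : RingHom.ker f ≤ Ring.jacobson S) :
    IsSemisimpleRing T ↔ Ring.jacobson S = RingHom.ker f := by
  have : RingHomSurjective f := ⟨hf⟩
  constructor
  · intro _
    refine le_antisymm ?_ hker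
    rw [RingHom.ker_eq_comap_bot, ← IsSemisimpleRing.jacobson_eq_bot T]
    exact Ring.le_comap_jacobson f
  · intro h
    have hle : ∀ a ∈ Ring.jacobson S, f a = 0 := fun a ha ↦ h.le ha
    exact RingHom.isSemisimpleRing_of_surjective (Ideal.Quotient.lift _ f hle)
      (Ideal.Quotient.lift_surjective_of_surjective _ hle hf)

end Ring

section Submodule

variable {R Λ Γ : Type*} [CommSemiring R] [Semiring Λ] [Semiring Γ] [Algebra R Λ] [Algebra R Γ]

theorem commute_restrictScalars_top (I : Ideal Λ) [I.IsTwoSided] :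
    Commute (I.restrictScalars R) ⊤ := by
  have mul_top : I.restrictScalars R * ⊤ = I.restrictScalars R :=
    le_antisymm (Submodule.mul_le.2 fun _ hx y _ ↦ I.mul_mem_right y hx)
      fun x hx ↦ mul_one x ▸ Submodule.mul_mem_mul hx Submodule.mem_top
  have top_mul : ⊤ * I.restrictScalars R = I.restrictScalars R :=
    le_antisymm (Submodule.mul_le.2 fun x _ _ hy ↦ I.mul_mem_left x hy)
      fun x hx ↦ one_mul x ▸ Submodule.mul_mem_mul Submodule.mem_top hx
  exact mul_top.trans top_mul.symm

theorem isNilpotent_restrictScalars {I : Ideal Λ} (hI : IsNilpotent I) :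
    IsNilpotent (I.restrictScalars R) := by
  obtain ⟨n, hn⟩ := hI
  refine ⟨n + 1, ?_⟩
  rw [← Submodule.restrictScalars_pow n.succ_ne_zero, Submodule.pow_succ, hn, zero_mul]
  rfl

theorem isNilpotent_of_mem_of_isNilpotent {N : Submodule R Λ} (hN : IsNilpotent N) {x : Λ}
    (hx : x ∈ N) : IsNilpotent x := by
  obtain ⟨n, hn⟩ := hN
  exact ⟨n, by simpa [hn] using N.pow_mem_pow hx n⟩

theorem commute_map_includeLeft_map_includeRight (U : Submodule R Λ) (V : Submodule R Γ) :
    Commute (U.map (Algebra.TensorProduct.includeLeft : Λ →ₐ[R] Λ ⊗[R] Γ).toLinearMap)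
      (V.map (Algebra.TensorProduct.includeRight : Γ →ₐ[R] Λ ⊗[R] Γ).toLinearMap) := by
  refine Submodule.mul_comm_of_commute ?_
  rintro _ ⟨a, -, rfl⟩ _ ⟨b, -, rfl⟩
  simp [Commute, SemiconjBy]

theorem map₂_mk_eq_map_includeLeft_mul_map_includeRight (U : Submodule R Λ) (V : Submodule R Γ) :
    Submodule.map₂ (TensorProduct.mk R Λ Γ) U V =
      U.map (Algebra.TensorProduct.includeLeft : Λ →ₐ[R] Λ ⊗[R] Γ).toLinearMap *
        V.map (Algebra.TensorProduct.includeRight : Γ →ₐ[R] Λ ⊗[R] Γ).toLinearMap := by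
  rw [Submodule.mul_eq_map₂, Submodule.map₂_map_map]
  congr 1
  ext
  simp

theorem isNilpotent_map₂_mk_sup {I : Ideal Λ} {J : Ideal Γ} [I.IsTwoSided] [J.IsTwoSided]
    (hI : IsNilpotent I) (hJ : IsNilpotent J) :
    IsNilpotent (Submodule.map₂ (TensorProduct.mk R Λ Γ) (I.restrictScalars R) ⊤ ⊔
      Submodule.map₂ (TensorProduct.mk R Λ Γ) ⊤ (J.restrictScalars R)) := by
  simp only [map₂_mk_eq_map_includeLeft_mul_map_includeRight]
  set ιl := Submodule.mapHom (Algebra.TensorProduct.includeLeft : Λ →ₐ[R] Λ ⊗[R] Γ)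
  set ιr := Submodule.mapHom (Algebra.TensorProduct.includeRight : Γ →ₐ[R] Λ ⊗[R] Γ)
  have comm (U V) : Commute (ιl U) (ιr V) := commute_map_includeLeft_map_includeRight U V
  have hIΓ : IsNilpotent (ιl (I.restrictScalars R) * ιr ⊤) :=
    (comm _ _).isNilpotent_mul_right ((isNilpotent_restrictScalars hI).map ιl)
  have hΛJ : IsNilpotent (ιl ⊤ * ιr (J.restrictScalars R)) :=
    (comm _ _).isNilpotent_mul_left ((isNilpotent_restrictScalars hJ).map ιr)
  have hcomm : Commute (ιl (I.restrictScalars R) * ιr ⊤) (ιl ⊤ * ιr (J.restrictScalars R)) :=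
    (((commute_restrictScalars_top I).map ιl).mul_right (comm _ _)).mul_left
      ((comm _ _).symm.mul_right ((commute_restrictScalars_top J).symm.map ιr))
  exact hcomm.isNilpotent_add hIΓ hΛJ

end Submodule

section TensorProductMap

variable {R Λ Γ A B : Type*} [CommRing R] [Ring Λ] [Ring Γ] [Ring A] [Ring B]
  [Algebra R Λ] [Algebra R Γ] [Algebra R A] [Algebra R B]
  {p : Λ →ₐ[R] A} {q : Γ →ₐ[R] B}

theorem restrictScalars_ker_tensorProductMap
    (hp : Function.Surjective p) (hq : Function.Surjective q) :
    (RingHom.ker (Algebra.TensorProduct.map p q)).restrictScalars R =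
      Submodule.map₂ (TensorProduct.mk R Λ Γ) ((RingHom.ker p).restrictScalars R) ⊤ ⊔
        Submodule.map₂ (TensorProduct.mk R Λ Γ) ⊤ ((RingHom.ker q).restrictScalars R) := by
  have hker := TensorProduct.map_ker p.toLinearMap.exact_subtype_ker_map hp
    q.toLinearMap.exact_subtype_ker_map hq
  rw [sup_comm, LinearMap.lTensor, LinearMap.rTensor] at hker
  simp only [range_map, Submodule.range_subtype, LinearMap.range_id] at hker
  exact hker

theorem ker_tensorProductMap_le_jacobson
    (hp : Function.Surjective p) (hq : Function.Surjective q)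
    (hkerp : IsNilpotent (RingHom.ker p)) (hkerq : IsNilpotent (RingHom.ker q)) :
    RingHom.ker (Algebra.TensorProduct.map p q) ≤ Ring.jacobson (Λ ⊗[R] Γ) := by
  have hker := isNilpotent_map₂_mk_sup (R := R) hkerp hkerq
  rw [← restrictScalars_ker_tensorProductMap hp hq] at hker
  exact le_jacobson_of_forall_isNilpotent fun x hx ↦ isNilpotent_of_mem_of_isNilpotent hker hx

theorem semisimple_quotient_tensor_iff_radical_tensor_general
    [IsSemisimpleRing ((Λ ⊗[R] Γ) ⧸ Ring.jacobson (Λ ⊗[R] Γ))]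
    (hp : Function.Surjective p) (hq : Function.Surjective q)
    (hkerp : IsNilpotent (RingHom.ker p)) (hkerq : IsNilpotent (RingHom.ker q)) :
    IsSemisimpleRing (A ⊗[R] B) ↔
      (Ring.jacobson (Λ ⊗[R] Γ)).restrictScalars R =
        LinearMap.range (TensorProduct.map
            ((RingHom.ker p).restrictScalars R).subtype (LinearMap.id : Γ →ₗ[R] Γ)) ⊔
          LinearMap.range (TensorProduct.map
            (LinearMap.id : Λ →ₗ[R] Λ) ((RingHom.ker q).restrictScalars R).subtype) := by
  simp only [range_map, Submodule.range_subtype, LinearMap.range_id]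
  rw [← restrictScalars_ker_tensorProductMap hp hq, Submodule.restrictScalars_inj]
  exact isSemisimpleRing_iff_jacobson_eq_ker (TensorProduct.map_surjective hp hq)
    (ker_tensorProductMap_le_jacobson hp hq hkerp hkerq)

end TensorProductMap

/-- For finite dimensional algebras `Λ`, `Γ` over a field `K`, the algebra
`(Λ/rad Λ) ⊗ (Γ/rad Γ)` is semisimple if and only if
`rad (Λ ⊗ Γ) = rad Λ ⊗ Γ + Λ ⊗ rad Γ` (an equality of ideals of `Λ ⊗ Γ`, here expressed as an
equality of the underlying `K`-subspaces).  The quotients `Λ/rad Λ` and `Γ/rad Γ` are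
represented by arbitrary surjective algebra homomorphisms `p : Λ → A`, `q : Γ → B` whose
kernels are the Jacobson radicals. -/
theorem semisimple_quotient_tensor_iff_radical_tensor
    (K Λ Γ A B : Type*) [Field K] [Ring Λ] [Ring Γ]
    [Algebra K Λ] [Algebra K Γ] [FiniteDimensional K Λ] [FiniteDimensional K Γ]
    [Ring A] [Algebra K A] [Ring B] [Algebra K B]
    (p : Λ →ₐ[K] A) (q : Γ →ₐ[K] B)
    (hp : Function.Surjective p) (hq : Function.Surjective q)
    (hkerp : RingHom.ker p = (⊥ : Ideal Λ).jacobson)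
    (hkerq : RingHom.ker q = (⊥ : Ideal Γ).jacobson) :
    IsSemisimpleRing (A ⊗[K] B) ↔
      Submodule.restrictScalars K ((⊥ : Ideal (Λ ⊗[K] Γ)).jacobson) =
        LinearMap.range (TensorProduct.map
            (((⊥ : Ideal Λ).jacobson.restrictScalars K).subtype) (LinearMap.id : Γ →ₗ[K] Γ)) ⊔
          LinearMap.range (TensorProduct.map
            (LinearMap.id : Λ →ₗ[K] Λ) (((⊥ : Ideal Γ).jacobson.restrictScalars K).subtype)) := by
  have := IsArtinianRing.of_finite K Λ
  have := IsArtinianRing.of_finite K Γ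
  have := IsArtinianRing.of_finite K (Λ ⊗[K] Γ)
  rw [Ideal.jacobson_bot (R := Λ ⊗[K] Γ), ← hkerp, ← hkerq]
  exact semisimple_quotient_tensor_iff_radical_tensor_general hp hq
    (hkerp ▸ IsArtinianRing.isNilpotent_jacobson_bot)
    (hkerq ▸ IsArtinianRing.isNilpotent_jacobson_bot)
end

section
/- Let Λ and Γ be algebras over an algebraically closed field K. Then Λ and Γ are both basic finite dimensional K-algebras if and only if the tensor product algebra Λ⊗Γ is a basic finite dimensional K-algebra. -/
open TensorProduct

/-- A finite dimensional algebra `A` over a field `K` is *basic* if `A/rad A` is isomorphic,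
as a `K`-algebra, to a finite direct product `K × ⋯ × K` of copies of `K`; equivalently,
there is a surjective `K`-algebra homomorphism `A → (Fin n → K)` whose kernel is the
Jacobson radical of `A`. -/
def IsBasicAlgebra (K A : Type*) [Field K] [Ring A] [Algebra K A] : Prop :=
  ∃ (n : ℕ) (φ : A →ₐ[K] (Fin n → K)),
    Function.Surjective φ ∧ RingHom.ker φ = (⊥ : Ideal A).jacobson

/-!
A finite dimensional algebra is basic exactly when an element annihilated by every character
`A → K` is nilpotent: Dedekind's independence of characters makes the joint evaluation at all
characters surjective, so only its kernel matters.

This criterion pulls back along any homomorphism whose kernel is nil. In particular it descends to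
the factors of `Λ ⊗ Γ`, which embed in it. Conversely, if `Λ → Kⁿ` has kernel `rad Λ`, then
`Λ ⊗ Γ → Kⁿ ⊗ Γ ≃ Γⁿ` has kernel `rad Λ ⊗ Γ`, which is nilpotent since `rad Λ` is, and `Γⁿ`
inherits the criterion from `Γ`.
-/

section Nilpotent

theorem isNilpotent_of_mem_isNilpotent_ideal {R : Type*} [Semiring R] {I : Ideal R}
    (hI : IsNilpotent I) {x : R} (hx : x ∈ I) : IsNilpotent x := by
  obtain ⟨k, hk⟩ := hI
  refine ⟨k, ?_⟩
  have hxk : x ^ k ∈ I ^ k := Ideal.pow_mem_pow hx k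
  rwa [hk] at hxk

theorem isNilpotent_of_map_of_ker_isNilpotent {R S F : Type*} [Semiring R] [Semiring S]
    [FunLike F R S] [RingHomClass F R S] {f : F} (hf : ∀ x ∈ RingHom.ker f, IsNilpotent x)
    {x : R} (hx : IsNilpotent (f x)) : IsNilpotent x := by
  obtain ⟨k, hk⟩ := hx
  exact (hf (x ^ k) (by rw [RingHom.mem_ker, map_pow, hk])).of_pow

theorem isNilpotent_of_forall_apply {ι : Type*} [Finite ι] {R : ι → Type*}
    [∀ i, MonoidWithZero (R i)] {x : ∀ i, R i} (hx : ∀ i, IsNilpotent (x i)) :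
    IsNilpotent x := by
  choose k hk using hx
  obtain ⟨N, hN⟩ := (Set.finite_range k).bddAbove
  exact ⟨N, funext fun i ↦ pow_eq_zero_of_le (hN ⟨i, rfl⟩) (hk i)⟩

theorem le_jacobson_bot_of_forall_isNilpotent {R : Type*} [Ring R] {I : Ideal R}
    (hI : ∀ x ∈ I, IsNilpotent x) : I ≤ (⊥ : Ideal R).jacobson := by
  intro x hx
  rw [Ideal.mem_jacobson_iff]
  intro y
  obtain ⟨z, hz⟩ := (hI (y * x) (I.mul_mem_left y hx)).isUnit_add_one.exists_left_inv
  refine ⟨z, ?_⟩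
  rw [Ideal.mem_bot, mul_assoc, sub_eq_zero, ← hz, mul_add, mul_one]

theorem isNilpotent_jacobson_bot_of_finiteDimensional (K A : Type*) [Field K] [Ring A]
    [Algebra K A] [FiniteDimensional K A] : IsNilpotent (⊥ : Ideal A).jacobson :=
  have : IsArtinianRing A := .of_finite K A
  IsArtinianRing.isNilpotent_jacobson_bot

end Nilpotent

section TensorProduct

open Algebra.TensorProduct

variable {R A B : Type*} [CommSemiring R] [Semiring A] [Semiring B] [Algebra R A] [Algebra R B]

theorem tmul_mem_map_includeLeft {I : Ideal A} {a : A} (ha : a ∈ I) (b : B) :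
    a ⊗ₜ[R] b ∈ I.map (includeLeft : A →ₐ[R] A ⊗[R] B) := by
  simpa using Ideal.mul_mem_left _ ((1 : A) ⊗ₜ[R] b)
    (Ideal.mem_map_of_mem (includeLeft : A →ₐ[R] A ⊗[R] B) ha)

theorem map_includeLeft_mul_le (I J : Ideal A) :
    I.map (includeLeft : A →ₐ[R] A ⊗[R] B) * J.map (includeLeft : A →ₐ[R] A ⊗[R] B) ≤
      (I * J).map (includeLeft : A →ₐ[R] A ⊗[R] B) := by
  rw [Ideal.mul_le]
  intro x hx y hy
  rw [← Submodule.restrictScalars_mem R, Ideal.map_includeLeft_eq] at hx hy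
  obtain ⟨u, rfl⟩ := hx
  obtain ⟨v, rfl⟩ := hy
  induction u with
  | zero => simp
  | add u₁ u₂ h₁ h₂ => simpa only [map_add, add_mul] using add_mem h₁ h₂
  | tmul i b =>
    induction v with
    | zero => simp
    | add v₁ v₂ h₁ h₂ => simpa only [map_add, mul_add] using add_mem h₁ h₂
    | tmul j c =>
      simpa using tmul_mem_map_includeLeft (R := R) (Ideal.mul_mem_mul i.2 j.2) (b * c)

theorem map_includeLeft_pow_le (I : Ideal A) (n : ℕ) :
    I.map (includeLeft : A →ₐ[R] A ⊗[R] B) ^ n ≤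
      (I ^ n).map (includeLeft : A →ₐ[R] A ⊗[R] B) := by
  induction n with
  | zero => simp [Submodule.pow_zero, Ideal.one_eq_top, Ideal.map_top]
  | succ n ih =>
    rw [Submodule.pow_succ, Submodule.pow_succ]
    exact (Ideal.mul_mono_left ih).trans (map_includeLeft_mul_le _ _)

theorem isNilpotent_map_includeLeft {I : Ideal A} (hI : IsNilpotent I) :
    IsNilpotent (I.map (includeLeft : A →ₐ[R] A ⊗[R] B)) := by
  obtain ⟨n, hn⟩ := hI
  refine ⟨n, le_bot_iff.1 ((map_includeLeft_pow_le I n).trans ?_)⟩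
  rw [hn, Ideal.zero_eq_bot, Ideal.map_bot]

end TensorProduct

theorem pi_surjective_of_linearIndependent {ι K V : Type*} [Finite ι] [Field K] [AddCommGroup V]
    [Module K V] {f : ι → Module.Dual K V} (hf : LinearIndependent K f) :
    Function.Surjective (LinearMap.pi f) := by
  classical
  have := Fintype.ofFinite ι
  rw [← LinearMap.dualMap_injective_iff, injective_iff_map_eq_zero]
  intro g hg
  have relation : ∑ i, g (Pi.single i 1) • f i = 0 := by
    ext v
    have hgv : g (LinearMap.pi f v) = 0 := LinearMap.congr_fun hg v
    rw [← (Pi.basisFun K ι).sum_repr (LinearMap.pi f v)] at hgv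
    simpa [mul_comm] using hgv
  ext i
  simpa using Fintype.linearIndependent_iff.1 hf _ relation i

/-- The elements of `A` annihilated by all characters, that is, by all `K`-algebra homomorphisms
`A → K`, are nilpotent. For finite dimensional `A` over a field this is equivalent to `A` being
basic, but it passes visibly to subalgebras. -/
def CharactersDetectNilpotents (K A : Type*) [CommSemiring K] [Semiring A] [Algebra K A] : Prop :=
  ∀ a : A, (∀ χ : A →ₐ[K] K, χ a = 0) → IsNilpotent a

namespace CharactersDetectNilpotents

section CommSemiring

variable {K A B : Type*} [CommSemiring K] [Semiring A] [Semiring B] [Algebra K A] [Algebra K B]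

theorem self (K : Type*) [CommSemiring K] : CharactersDetectNilpotents K K :=
  fun a ha ↦ ⟨1, by simpa using ha (AlgHom.id K K)⟩

theorem of_ker_isNilpotent (hB : CharactersDetectNilpotents K B) (f : A →ₐ[K] B)
    (hf : ∀ a ∈ RingHom.ker f, IsNilpotent a) : CharactersDetectNilpotents K A :=
  fun a ha ↦ isNilpotent_of_map_of_ker_isNilpotent hf (hB (f a) fun χ ↦ ha (χ.comp f))

theorem of_injective (hB : CharactersDetectNilpotents K B) (f : A →ₐ[K] B)
    (hf : Function.Injective f) : CharactersDetectNilpotents K A :=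
  fun a ha ↦ (IsNilpotent.map_iff hf).1 (hB (f a) fun χ ↦ ha (χ.comp f))

theorem pi {ι : Type*} [Finite ι] {A : ι → Type*} [∀ i, Semiring (A i)] [∀ i, Algebra K (A i)]
    (hA : ∀ i, CharactersDetectNilpotents K (A i)) : CharactersDetectNilpotents K (∀ i, A i) :=
  fun a ha ↦ isNilpotent_of_forall_apply fun i ↦
    hA i (a i) fun χ ↦ ha (χ.comp (Pi.evalAlgHom K A i))

end CommSemiring

theorem tensorProduct_of_surjective {ι K A B : Type*} [Finite ι] [CommRing K] [Ring A] [Ring B]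
    [Algebra K A] [Algebra K B] {φ : A →ₐ[K] (ι → K)} (hφ : Function.Surjective φ)
    (hker : IsNilpotent (RingHom.ker φ)) (hB : CharactersDetectNilpotents K B) :
    CharactersDetectNilpotents K (A ⊗[K] B) := by
  classical
  have := Fintype.ofFinite ι
  have hpi : CharactersDetectNilpotents K ((ι → K) ⊗[K] B) :=
    let e : (ι → K) ⊗[K] B ≃ₐ[K] (ι → B) :=
      (Algebra.TensorProduct.comm K (ι → K) B).trans
        (Algebra.TensorProduct.piScalarRight K K B ι)
    (pi fun _ ↦ hB).of_injective e.toAlgHom e.injective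
  refine hpi.of_ker_isNilpotent (Algebra.TensorProduct.map φ (AlgHom.id K B)) fun x hx ↦ ?_
  rw [Algebra.TensorProduct.rTensor_ker φ hφ] at hx
  exact isNilpotent_of_mem_isNilpotent_ideal (isNilpotent_map_includeLeft hker) hx

end CharactersDetectNilpotents

section IsBasicAlgebra

variable {K A B : Type*} [Field K] [Ring A] [Ring B] [Algebra K A] [Algebra K B]

theorem IsBasicAlgebra.of_surjective {ι : Type*} [Finite ι] {φ : A →ₐ[K] (ι → K)}
    (hφ : Function.Surjective φ) (hker : RingHom.ker φ = (⊥ : Ideal A).jacobson) :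
    IsBasicAlgebra K A := by
  let e : (ι → K) ≃ₐ[K] (Fin (Nat.card ι) → K) := .piCongrLeft K (fun _ ↦ K) (Finite.equivFin ι)
  refine ⟨Nat.card ι, e.toAlgHom.comp φ, e.surjective.comp hφ, ?_⟩
  rw [← hker]
  ext a
  exact map_eq_zero_iff e e.injective

theorem CharactersDetectNilpotents.isBasicAlgebra [FiniteDimensional K A]
    (hA : CharactersDetectNilpotents K A) : IsBasicAlgebra K A := by
  let φ : A →ₐ[K] ((A →ₐ[K] K) → K) := AlgHom.pi fun χ ↦ χ
  have hφ : Function.Surjective φ :=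
    pi_surjective_of_linearIndependent (linearIndependent_algHom_toLinearMap K A K)
  have ker_nil : ∀ a ∈ RingHom.ker φ, IsNilpotent a := fun a ha ↦ hA a (congrFun ha)
  refine .of_surjective hφ ?_
  refine le_antisymm (le_jacobson_bot_of_forall_isNilpotent ker_nil) fun a ha ↦ ?_
  have ha_nil : IsNilpotent a :=
    isNilpotent_of_mem_isNilpotent_ideal (isNilpotent_jacobson_bot_of_finiteDimensional K A) ha
  exact (ha_nil.map φ).eq_zero

theorem IsBasicAlgebra.charactersDetectNilpotents [FiniteDimensional K A]
    (hA : IsBasicAlgebra K A) : CharactersDetectNilpotents K A := by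
  obtain ⟨n, φ, -, hker⟩ := hA
  refine (CharactersDetectNilpotents.pi fun _ ↦ .self K).of_ker_isNilpotent φ fun a ha ↦ ?_
  rw [hker] at ha
  exact isNilpotent_of_mem_isNilpotent_ideal (isNilpotent_jacobson_bot_of_finiteDimensional K A) ha

theorem IsBasicAlgebra.of_injective [FiniteDimensional K B] (hB : IsBasicAlgebra K B)
    (f : A →ₐ[K] B) (hf : Function.Injective f) : IsBasicAlgebra K A :=
  have : FiniteDimensional K A := .of_injective f.toLinearMap hf
  (hB.charactersDetectNilpotents.of_injective f hf).isBasicAlgebra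

theorem IsBasicAlgebra.tensorProduct [FiniteDimensional K A] [FiniteDimensional K B]
    (hA : IsBasicAlgebra K A) (hB : IsBasicAlgebra K B) : IsBasicAlgebra K (A ⊗[K] B) := by
  obtain ⟨n, φ, hφ, hker⟩ := hA
  have ker_nilpotent : IsNilpotent (RingHom.ker φ) :=
    hker ▸ isNilpotent_jacobson_bot_of_finiteDimensional K A
  exact (CharactersDetectNilpotents.tensorProduct_of_surjective hφ ker_nilpotent
    hB.charactersDetectNilpotents).isBasicAlgebra

end IsBasicAlgebra

theorem isBasicAlgebra_tensorProduct_iff_general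
    (K Λ Γ : Type*) [Field K] [Ring Λ] [Ring Γ]
    [Nontrivial Λ] [Nontrivial Γ] [Algebra K Λ] [Algebra K Γ] :
    (IsBasicAlgebra K Λ ∧ FiniteDimensional K Λ ∧
        IsBasicAlgebra K Γ ∧ FiniteDimensional K Γ) ↔
      (IsBasicAlgebra K (Λ ⊗[K] Γ) ∧ FiniteDimensional K (Λ ⊗[K] Γ)) := by
  constructor
  · rintro ⟨hΛ, _, hΓ, _⟩
    exact ⟨hΛ.tensorProduct hΓ, inferInstance⟩
  · rintro ⟨h, _⟩
    let ιΛ : Λ →ₐ[K] Λ ⊗[K] Γ := Algebra.TensorProduct.includeLeft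
    let ιΓ : Γ →ₐ[K] Λ ⊗[K] Γ := Algebra.TensorProduct.includeRight
    have hιΛ : Function.Injective ιΛ :=
      Algebra.TensorProduct.includeLeft_injective (algebraMap K Γ).injective
    have hιΓ : Function.Injective ιΓ :=
      Algebra.TensorProduct.includeRight_injective (algebraMap K Λ).injective
    exact ⟨h.of_injective ιΛ hιΛ, .of_injective ιΛ.toLinearMap hιΛ,
      h.of_injective ιΓ hιΓ, .of_injective ιΓ.toLinearMap hιΓ⟩

/-- For (nonzero) algebras `Λ`, `Γ` over an algebraically closed field `K`:
`Λ` and `Γ` are both basic finite dimensional algebras if and only if `Λ ⊗[K] Γ` is a basic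
finite dimensional algebra. -/
theorem isBasicAlgebra_tensorProduct_iff
    (K Λ Γ : Type*) [Field K] [IsAlgClosed K] [Ring Λ] [Ring Γ]
    [Nontrivial Λ] [Nontrivial Γ] [Algebra K Λ] [Algebra K Γ] :
    (IsBasicAlgebra K Λ ∧ FiniteDimensional K Λ ∧
        IsBasicAlgebra K Γ ∧ FiniteDimensional K Γ) ↔
      (IsBasicAlgebra K (Λ ⊗[K] Γ) ∧ FiniteDimensional K (Λ ⊗[K] Γ)) :=
  isBasicAlgebra_tensorProduct_iff_general K Λ Γ
end

section
/- Let Λ and Γ be finite dimensional algebras over an algebraically closed field K, let M be a nonzero finitely generated left Λ-module and N a nonzero finitely generated left Γ-module. Then M and N are both indecomposable modules if and only if M⊗N is an indecomposable (Λ⊗Γ)-module. -/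
open TensorProduct

section Pre
variable {K Λ Γ M N : Type*} [Field K] [Ring Λ] [Ring Γ] [Algebra K Λ] [Algebra K Γ]
  [AddCommGroup M] [Module K M] [Module Λ M] [IsScalarTower K Λ M]
  [AddCommGroup N] [Module K N] [Module Γ N] [IsScalarTower K Γ N]

/-- The action of `Γ` on `M ⊗[K] N` through the right factor. -/
noncomputable def rsmul (g : Γ) (x : M ⊗[K] N) : M ⊗[K] N :=
  (TensorProduct.comm K M N).symm (g • TensorProduct.comm K M N x)

lemma rsmul_tmul (g : Γ) (m : M) (n : N) :
    rsmul g (m ⊗ₜ[K] n) = m ⊗ₜ[K] (g • n) := by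
  simp [rsmul, TensorProduct.smul_tmul']

lemma rsmul_add (g : Γ) (x y : M ⊗[K] N) :
    rsmul g (x + y) = rsmul g x + rsmul g y := by
  simp [rsmul, smul_add]

/-- The right-factor `Γ`-module structure on `M ⊗[K] N`.  Not an instance, to avoid
diamonds; it is only used to construct `tensorTensorModule` below. -/
noncomputable def tensorRightModule : Module Γ (M ⊗[K] N) where
  smul := rsmul
  one_smul x := by show rsmul 1 x = x; simp [rsmul]
  mul_smul g h x := by
    show rsmul (g * h) x = rsmul g (rsmul h x); simp [rsmul, mul_smul]
  smul_zero g := by show rsmul g 0 = 0; simp [rsmul]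
  smul_add g x y := by show rsmul g (x + y) = rsmul g x + rsmul g y; exact rsmul_add g x y
  add_smul g h x := by
    show rsmul (g + h) x = rsmul g x + rsmul h x; simp [rsmul, add_smul]
  zero_smul x := by show rsmul 0 x = 0; simp [rsmul]

instance tensorLeftTower : IsScalarTower K Λ (M ⊗[K] N) := by
  constructor
  intro c a x
  induction x using TensorProduct.induction_on with
  | zero => simp
  | tmul m n =>
      rw [TensorProduct.smul_tmul', TensorProduct.smul_tmul', smul_assoc]
      exact (TensorProduct.smul_tmul' c (a • m) n).symm
  | add x y hx hy => rw [smul_add, smul_add, hx, hy]; exact (smul_add c _ _).symm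

lemma pre_smulCommClass :
    letI : Module Γ (M ⊗[K] N) := tensorRightModule
    SMulCommClass Λ Γ (M ⊗[K] N) := by
  letI : Module Γ (M ⊗[K] N) := tensorRightModule
  constructor
  intro a g x
  show a • rsmul g x = rsmul g (a • x)
  induction x using TensorProduct.induction_on with
  | zero => simp [rsmul]
  | tmul m n => rw [rsmul_tmul, TensorProduct.smul_tmul', TensorProduct.smul_tmul', rsmul_tmul]
  | add x y hx hy => rw [rsmul_add, smul_add, hx, hy, smul_add, rsmul_add]

lemma pre_rightTower :
    letI : Module Γ (M ⊗[K] N) := tensorRightModule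
    IsScalarTower K Γ (M ⊗[K] N) := by
  letI : Module Γ (M ⊗[K] N) := tensorRightModule
  constructor
  intro c g x
  show rsmul (c • g) x = c • rsmul g x
  unfold rsmul
  rw [smul_assoc]
  exact map_smul (TensorProduct.comm K M N).symm c _

/-- The `(Λ ⊗[K] Γ)`-module structure on `M ⊗[K] N`, characterized by
`(a ⊗ₜ b) • (m ⊗ₜ n) = (a • m) ⊗ₜ (b • n)`. -/
noncomputable instance tensorTensorModule :
    Module (Λ ⊗[K] Γ) (M ⊗[K] N) :=
  letI : Module Γ (M ⊗[K] N) := tensorRightModule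
  haveI := (pre_smulCommClass (K := K) (Λ := Λ) (Γ := Γ) (M := M) (N := N))
  haveI := (pre_rightTower (K := K) (Γ := Γ) (M := M) (N := N))
  TensorProduct.Algebra.module

lemma tensorTensor_smul_tmul (a : Λ) (g : Γ) (m : M) (n : N) :
    (a ⊗ₜ[K] g) • (m ⊗ₜ[K] n) = (a • m) ⊗ₜ[K] (g • n) := by
  letI : Module Γ (M ⊗[K] N) := tensorRightModule
  haveI := (pre_smulCommClass (K := K) (Λ := Λ) (Γ := Γ) (M := M) (N := N))
  haveI := (pre_rightTower (K := K) (Γ := Γ) (M := M) (N := N))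
  show TensorProduct.Algebra.moduleAux (a ⊗ₜ[K] g) (m ⊗ₜ[K] n) = _
  rw [TensorProduct.Algebra.moduleAux_apply]
  show a • rsmul g (m ⊗ₜ[K] n) = _
  rw [rsmul_tmul, TensorProduct.smul_tmul']

instance tensorTensorTower : IsScalarTower K (Λ ⊗[K] Γ) (M ⊗[K] N) := by
  constructor
  intro c x v
  letI : Module Γ (M ⊗[K] N) := tensorRightModule
  haveI := (pre_smulCommClass (K := K) (Λ := Λ) (Γ := Γ) (M := M) (N := N))
  haveI := (pre_rightTower (K := K) (Γ := Γ) (M := M) (N := N))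
  show TensorProduct.Algebra.moduleAux (c • x) v = c • TensorProduct.Algebra.moduleAux x v
  rw [map_smul, LinearMap.smul_apply]

end Pre

/-- A module is *indecomposable* if it is nonzero and is not the internal direct sum of two
nonzero submodules. -/
def IsIndecomposableModule (R M : Type*) [Ring R] [AddCommGroup M] [Module R M] : Prop :=
  Nontrivial M ∧ ∀ p q : Submodule R M, IsCompl p q → p = ⊥ ∨ q = ⊥

/-!
Let `E = End_Λ M`. By Fitting's lemma every endomorphism of an indecomposable module of finite
length is nilpotent or invertible, and over an algebraically closed field this gives
`E = K + rad E`. Since `rad E` kills every simple `E`-submodule of `M`, there is a common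
eigenvector `m ≠ 0` of `E`, and every `(Λ ⊗ Γ)`-endomorphism of `M ⊗ N` maps `m ⊗ N` into itself.
If `M ⊗ N = P ⊕ Q`, then `{n | m ⊗ n ∈ P}` and `{n | m ⊗ n ∈ Q}` are therefore complementary
submodules of `N`, so one of `P` and `Q`, say `Q`, contains `m ⊗ N`. The projection onto `P` along
`Q` kills `m ⊗ N`; its matrix coefficients in `E` kill `m`, hence lie in `rad E`, and Nakayama's
lemma, applied to the `E`-submodule of `M` generated by the contractions of an element of `P`,
shows `P = 0`.

Conversely, a nonzero module is indecomposable iff its endomorphism ring has only trivial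
idempotents, and this passes from `M ⊗ N` to `M` and `N` along the injections `e ↦ e ⊗ id` and
`h ↦ id ⊗ h` of endomorphism rings.
-/

section Indecomposable

variable {R M : Type*} [Ring R] [AddCommGroup M] [Module R M]

lemma isIndecomposableModule_iff_isIdempotentElem :
    IsIndecomposableModule R M ↔
      Nontrivial M ∧ ∀ e : Module.End R M, IsIdempotentElem e → e = 0 ∨ e = 1 := by
  refine and_congr_right fun _ ↦ ⟨fun h e he ↦ ?_, fun h p q hpq ↦ ?_⟩
  · refine (h _ _ (LinearMap.IsIdempotentElem.isCompl he)).imp LinearMap.range_eq_bot.1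
      fun hker ↦ ?_
    rw [LinearMap.IsIdempotentElem.ker_eq_range he, LinearMap.range_eq_bot] at hker
    exact (sub_eq_zero.1 hker).symm
  · refine (h _ (Submodule.isIdempotentElem_projection hpq)).imp (fun he ↦ ?_) fun he ↦ ?_
    · rw [← Submodule.range_projection hpq, he, LinearMap.range_zero]
    · rw [← Submodule.ker_projection hpq, he]
      exact LinearMap.ker_id

lemma IsIndecomposableModule.of_injective_ringHom {S P : Type*} [Ring S] [AddCommGroup P]
    [Module S P] (F : Module.End R M →+* Module.End S P) (hF : Function.Injective F)
    (hP : IsIndecomposableModule S P) : IsIndecomposableModule R M := by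
  rw [isIndecomposableModule_iff_isIdempotentElem] at hP ⊢
  obtain ⟨_, hP⟩ := hP
  have hnt : Nontrivial (Module.End R M) := F.domain_nontrivial
  refine ⟨not_subsingleton_iff_nontrivial.1 fun _ ↦ not_subsingleton (Module.End R M) ?_,
    fun e he ↦ ?_⟩
  · infer_instance
  · exact (hP (F e) (he.map F)).imp (fun h ↦ hF (h.trans (map_zero F).symm))
      fun h ↦ hF (h.trans (map_one F).symm)

end Indecomposable

section Jacobson

lemma isNilpotent_mul_of_forall_isNilpotent_or_isUnit {R : Type*} [MonoidWithZero R]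
    (hR : ∀ a : R, IsNilpotent a ∨ IsUnit a) {a : R} (ha : IsNilpotent a) (b : R) :
    IsNilpotent (b * a) := by
  refine (hR _).elim id fun hu ↦ ?_
  obtain ⟨v, hv⟩ := hu.exists_left_inv
  obtain ⟨k, hk⟩ := ha
  have h01 : (0 : R) = 1 := by
    simpa [hk] using pow_mul_pow_eq_one k ((mul_assoc v b a).trans hv)
  exact ⟨1, eq_of_zero_eq_one h01 _ _⟩

lemma mem_ringJacobson_of_forall_isNilpotent_mul {R : Type*} [Ring R] {a : R}
    (h : ∀ b, IsNilpotent (b * a)) : a ∈ Ring.jacobson R := by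
  rw [← Ideal.jacobson_bot, Ideal.mem_jacobson_iff]
  intro b
  obtain ⟨z, hz⟩ := (h b).isUnit_one_add.exists_left_inv
  refine ⟨z, ?_⟩
  rw [Ideal.mem_bot, ← hz]
  noncomm_ring

lemma exists_ne_zero_forall_mem_ringJacobson_smul_eq_zero (R M : Type*) [Ring R] [AddCommGroup M]
    [Module R M] [IsArtinian R M] [Nontrivial M] :
    ∃ m : M, m ≠ 0 ∧ ∀ a ∈ Ring.jacobson R, a • m = 0 := by
  obtain ⟨S, hS, -⟩ := (eq_bot_or_exists_atom_le (⊤ : Submodule R M)).resolve_left top_ne_bot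
  have : IsSimpleModule R S := isSimpleModule_iff_isAtom.2 hS
  obtain ⟨m, hm, hm0⟩ := S.ne_bot_iff.1 hS.1
  refine ⟨m, hm0, fun a ha ↦ congrArg Subtype.val (?_ : a • (⟨m, hm⟩ : S) = 0)⟩
  exact Module.mem_annihilator.1 (IsSemisimpleModule.jacobson_le_annihilator R S ha) _

end Jacobson

namespace IsIndecomposableModule

section FiniteLength

variable {R M : Type*} [Ring R] [AddCommGroup M] [Module R M] [IsNoetherian R M] [IsArtinian R M]

lemma isNilpotent_or_isUnit (h : IsIndecomposableModule R M) (a : Module.End R M) :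
    IsNilpotent a ∨ IsUnit a := by
  obtain ⟨n, hn⟩ := a.eventually_isCompl_ker_pow_range_pow.exists_forall_of_atTop
  rcases h.2 _ _ (hn (n + 1) n.le_succ) with hker | hrange
  · have hbij := IsArtinian.bijective_of_injective_endomorphism _ (LinearMap.ker_eq_bot.1 hker)
    exact .inr ((isUnit_pow_iff n.succ_ne_zero).1 ((Module.End.isUnit_iff _).2 hbij))
  · exact .inl ⟨n + 1, LinearMap.range_eq_bot.1 hrange⟩

lemma mem_ringJacobson_of_not_isUnit (h : IsIndecomposableModule R M) {a : Module.End R M}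
    (ha : ¬IsUnit a) : a ∈ Ring.jacobson (Module.End R M) :=
  mem_ringJacobson_of_forall_isNilpotent_mul <|
    isNilpotent_mul_of_forall_isNilpotent_or_isUnit h.isNilpotent_or_isUnit <|
      (h.isNilpotent_or_isUnit a).resolve_right ha

lemma mem_ringJacobson_of_apply_eq_zero (h : IsIndecomposableModule R M) {a : Module.End R M}
    {m : M} (hm : m ≠ 0) (ha : a m = 0) : a ∈ Ring.jacobson (Module.End R M) :=
  h.mem_ringJacobson_of_not_isUnit fun hu ↦
    hm (((Module.End.isUnit_iff a).1 hu).1 (ha.trans (map_zero a).symm))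

end FiniteLength

section AlgClosed

variable {K Λ M : Type*} [Field K] [IsAlgClosed K] [Ring Λ] [Algebra K Λ]
  [AddCommGroup M] [Module K M] [Module Λ M] [IsScalarTower K Λ M] [FiniteDimensional K M]

variable (K) in
lemma exists_sub_algebraMap_mem_ringJacobson (h : IsIndecomposableModule Λ M)
    (a : Module.End Λ M) :
    ∃ c : K, a - algebraMap K (Module.End Λ M) c ∈ Ring.jacobson (Module.End Λ M) := by
  have : Nontrivial M := h.1
  have : IsNoetherian Λ M := isNoetherian_of_tower K inferInstance
  have : IsArtinian Λ M := isArtinian_of_tower K inferInstance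
  obtain ⟨c, hc⟩ := spectrum.nonempty_of_isAlgClosed_of_finiteDimensional K a
  exact ⟨c, h.mem_ringJacobson_of_not_isUnit fun hu ↦ hc (IsUnit.sub_iff.1 hu)⟩

variable (K) in
lemma exists_common_eigenvector (h : IsIndecomposableModule Λ M) :
    ∃ m : M, m ≠ 0 ∧ ∀ a : Module.End Λ M, ∃ c : K, a m = c • m := by
  have : Nontrivial M := h.1
  have : IsArtinian (Module.End Λ M) M := isArtinian_of_tower K inferInstance
  obtain ⟨m, hm, hJm⟩ :=
    exists_ne_zero_forall_mem_ringJacobson_smul_eq_zero (Module.End Λ M) M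
  refine ⟨m, hm, fun a ↦ ?_⟩
  obtain ⟨c, hc⟩ := h.exists_sub_algebraMap_mem_ringJacobson K a
  exact ⟨c, sub_eq_zero.1 (hJm _ hc)⟩

end AlgClosed

end IsIndecomposableModule

section Tensor

variable {K Λ Γ M N : Type*} [Field K] [Ring Λ] [Ring Γ] [Algebra K Λ] [Algebra K Γ]
  [AddCommGroup M] [Module K M] [Module Λ M] [IsScalarTower K Λ M]
  [AddCommGroup N] [Module K N] [Module Γ N] [IsScalarTower K Γ N]

instance tensorTensorLeftTower : IsScalarTower Λ (Λ ⊗[K] Γ) (M ⊗[K] N) where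
  smul_assoc a r x := by
    induction r with
    | zero => simp
    | add r s hr hs => simp only [smul_add, add_smul, hr, hs]
    | tmul b g =>
      induction x with
      | zero => simp
      | add x y hx hy => simp only [smul_add, hx, hy]
      | tmul m n => simp only [TensorProduct.smul_tmul', tensorTensor_smul_tmul, smul_assoc]

variable (Λ M) in
/-- The contraction `m ⊗ n ↦ ψ n • m` of the right factor of `M ⊗ N` against a functional `ψ`. -/
noncomputable def tensorContract (ψ : Module.Dual K N) : M ⊗[K] N →ₗ[Λ] M :=
  (AlgebraTensorModule.rid K Λ M).toLinearMap ∘ₗ AlgebraTensorModule.lTensor Λ M ψ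

@[simp]
lemma tensorContract_tmul (ψ : Module.Dual K N) (m : M) (n : N) :
    tensorContract Λ M ψ (m ⊗ₜ n) = ψ n • m := rfl

lemma eq_zero_of_tmul_eq_zero {m : M} (hm : m ≠ 0) {n : N} (h : m ⊗ₜ[K] n = 0) : n = 0 := by
  refine (Module.forall_dual_apply_eq_zero_iff K n).1 fun ψ ↦ ?_
  have hψ : ψ n • m = 0 := by rw [← tensorContract_tmul (Λ := K), h, map_zero]
  exact (smul_eq_zero.1 hψ).resolve_right hm

variable (Λ) in
lemma exists_sum_tensorContract_coord_tmul_eq {ι : Type*} (b : Module.Basis ι K N)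
    (x : M ⊗[K] N) :
    ∃ s : Finset ι, ∑ i ∈ s, tensorContract Λ M (b.coord i) x ⊗ₜ[K] b i = x := by
  obtain ⟨c, rfl⟩ := TensorProduct.eq_repr_basis_right b x
  have hcoord (i : ι) :
      tensorContract Λ M (b.coord i) (c.sum fun j m ↦ m ⊗ₜ b j) = c i := by
    classical
    simp [Finsupp.sum, Finsupp.single_apply, eq_comm]
  exact ⟨c.support, Finset.sum_congr rfl fun i _ ↦ by rw [hcoord]⟩

variable (Λ) in
lemma eq_zero_of_forall_tensorContract_eq_zero {x : M ⊗[K] N}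
    (h : ∀ ψ : Module.Dual K N, tensorContract Λ M ψ x = 0) : x = 0 := by
  obtain ⟨s, hs⟩ := exists_sum_tensorContract_coord_tmul_eq Λ (Module.Basis.ofVectorSpace K N) x
  rw [← hs]
  exact Finset.sum_eq_zero fun i _ ↦ by rw [h, TensorProduct.zero_tmul]

/-- The matrix coefficient of `f` at `ψ` and `n`: the endomorphism
`m ↦ (id ⊗ ψ) (f (m ⊗ n))` of the left factor `M`. -/
noncomputable def tensorCoeff (f : Module.End (Λ ⊗[K] Γ) (M ⊗[K] N)) (ψ : Module.Dual K N)
    (n : N) : Module.End Λ M :=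
  tensorContract Λ M ψ ∘ₗ f.restrictScalars Λ ∘ₗ (AlgebraTensorModule.mk K Λ M N).flip n

lemma tensorCoeff_apply (f : Module.End (Λ ⊗[K] Γ) (M ⊗[K] N)) (ψ : Module.Dual K N) (n : N)
    (m : M) : tensorCoeff f ψ n m = tensorContract Λ M ψ (f (m ⊗ₜ n)) := rfl

lemma exists_apply_tmul_eq_tmul {m : M} (hm : ∀ a : Module.End Λ M, ∃ c : K, a m = c • m)
    (f : Module.End (Λ ⊗[K] Γ) (M ⊗[K] N)) (n : N) : ∃ n' : N, f (m ⊗ₜ n) = m ⊗ₜ n' := by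
  let b := Module.Basis.ofVectorSpace K N
  obtain ⟨s, hs⟩ := exists_sum_tensorContract_coord_tmul_eq Λ b (f (m ⊗ₜ n))
  choose c hc using fun i ↦ hm (tensorCoeff f (b.coord i) n)
  refine ⟨∑ i ∈ s, c i • b i, hs.symm.trans ?_⟩
  simp only [← tensorCoeff_apply, hc, TensorProduct.smul_tmul, TensorProduct.tmul_sum]

lemma eq_zero_of_forall_tensorCoeff_mem_ringJacobson [IsNoetherian (Module.End Λ M) M]
    {f : Module.End (Λ ⊗[K] Γ) (M ⊗[K] N)}
    (hf : ∀ ψ n, tensorCoeff f ψ n ∈ Ring.jacobson (Module.End Λ M))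
    {x : M ⊗[K] N} (hx : f x = x) : x = 0 := by
  let U : Submodule (Module.End Λ M) M := .span _ (Set.range (tensorContract Λ M · x))
  have hmem (ψ : Module.Dual K N) : tensorContract Λ M ψ x ∈ U :=
    Submodule.subset_span ⟨ψ, rfl⟩
  have hU : U ≤ Ring.jacobson (Module.End Λ M) • U := by
    rw [Submodule.span_le]
    rintro _ ⟨ψ, rfl⟩
    let b := Module.Basis.ofVectorSpace K N
    obtain ⟨s, hs⟩ := exists_sum_tensorContract_coord_tmul_eq Λ b x
    have hsum : tensorContract Λ M ψ x =
        ∑ i ∈ s, tensorCoeff f ψ (b i) (tensorContract Λ M (b.coord i) x) := by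
      simp only [tensorCoeff_apply, ← map_sum, hs, hx]
    simp only [SetLike.mem_coe, hsum]
    exact sum_mem fun i _ ↦ Submodule.smul_mem_smul (hf ψ (b i)) (hmem _)
  have hbot : U = ⊥ := (IsNoetherian.noetherian U).eq_bot_of_le_jacobson_smul hU
  refine eq_zero_of_forall_tensorContract_eq_zero Λ fun ψ ↦ ?_
  simpa [hbot] using hmem ψ

/-- The slice `{n | m ⊗ n ∈ P}` of a submodule `P` of `M ⊗ N` at `m`. -/
def tensorSlice (P : Submodule (Λ ⊗[K] Γ) (M ⊗[K] N)) (m : M) : Submodule Γ N where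
  carrier := {n | m ⊗ₜ n ∈ P}
  add_mem' {n n'} hn hn' := by
    simpa only [Set.mem_ofPred, TensorProduct.tmul_add] using P.add_mem hn hn'
  zero_mem' := by simp
  smul_mem' g n hn := by
    simpa [tensorTensor_smul_tmul] using P.smul_mem ((1 : Λ) ⊗ₜ g) hn

@[simp]
lemma mem_tensorSlice {P : Submodule (Λ ⊗[K] Γ) (M ⊗[K] N)} {m : M} {n : N} :
    n ∈ tensorSlice P m ↔ m ⊗ₜ n ∈ P := Iff.rfl

lemma isCompl_tensorSlice {P Q : Submodule (Λ ⊗[K] Γ) (M ⊗[K] N)} (hPQ : IsCompl P Q) {m : M}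
    (hm0 : m ≠ 0) (hm : ∀ a : Module.End Λ M, ∃ c : K, a m = c • m) :
    IsCompl (tensorSlice P m) (tensorSlice Q m) := by
  constructor
  · rw [Submodule.disjoint_def]
    intro n hP hQ
    have h0 : m ⊗ₜ[K] n = 0 := Submodule.disjoint_def.1 hPQ.disjoint _ hP hQ
    exact eq_zero_of_tmul_eq_zero hm0 h0
  · rw [codisjoint_iff, Submodule.eq_top_iff']
    intro n
    obtain ⟨n', hn'⟩ := exists_apply_tmul_eq_tmul hm (P.projection Q hPQ) n
    have hP : n' ∈ tensorSlice P m := by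
      rw [mem_tensorSlice, ← hn']
      exact Submodule.projection_apply_mem hPQ _
    have hQ : n - n' ∈ tensorSlice Q m := by
      rw [mem_tensorSlice, TensorProduct.tmul_sub, ← hn']
      exact Submodule.sub_projection_mem hPQ _
    exact Submodule.mem_sup.2 ⟨n', hP, n - n', hQ, add_sub_cancel n' n⟩

lemma eq_bot_of_tensorSlice_eq_top [IsNoetherian (Module.End Λ M) M]
    {P Q : Submodule (Λ ⊗[K] Γ) (M ⊗[K] N)} (hPQ : IsCompl P Q) {m : M}
    (hm : ∀ a : Module.End Λ M, a m = 0 → a ∈ Ring.jacobson (Module.End Λ M))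
    (hQ : tensorSlice Q m = ⊤) : P = ⊥ := by
  have hcoeff (ψ : Module.Dual K N) (n : N) :
      tensorCoeff (P.projection Q hPQ) ψ n ∈ Ring.jacobson (Module.End Λ M) := by
    have hn : n ∈ tensorSlice Q m := hQ ▸ Submodule.mem_top
    apply hm
    rw [tensorCoeff_apply, Submodule.projection_apply_of_mem_right hPQ hn, map_zero]
  exact (Submodule.eq_bot_iff P).2 fun x hx ↦ eq_zero_of_forall_tensorCoeff_mem_ringJacobson hcoeff
    (Submodule.projection_apply_of_mem_left hPQ hx)

/-- The tensor product `e ⊗ h` of a `Λ`-linear and a `Γ`-linear endomorphism, as an endomorphism of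
the `(Λ ⊗ Γ)`-module `M ⊗ N`. -/
noncomputable def tensorEnd (e : Module.End Λ M) (h : Module.End Γ N) :
    Module.End (Λ ⊗[K] Γ) (M ⊗[K] N) where
  __ := TensorProduct.map (e.restrictScalars K) (h.restrictScalars K)
  map_smul' r x := by
    simp only [AddHom.toFun_eq_coe, LinearMap.coe_toAddHom, RingHom.id_apply]
    induction r with
    | zero => simp
    | add r s hr hs => simp only [add_smul, map_add, hr, hs]
    | tmul a g =>
      induction x with
      | zero => simp
      | add x y hx hy => simp only [smul_add, map_add, hx, hy]
      | tmul m n => simp [tensorTensor_smul_tmul]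

@[simp]
lemma tensorEnd_tmul (e : Module.End Λ M) (h : Module.End Γ N) (m : M) (n : N) :
    (tensorEnd e h : Module.End (Λ ⊗[K] Γ) (M ⊗[K] N)) (m ⊗ₜ n) = e m ⊗ₜ h n := rfl

lemma end_tensorProduct_ext {f g : Module.End (Λ ⊗[K] Γ) (M ⊗[K] N)}
    (h : ∀ m n, f (m ⊗ₜ n) = g (m ⊗ₜ n)) : f = g :=
  LinearMap.restrictScalars_injective K (TensorProduct.ext' h)

/-- The action `e ↦ e ⊗ id` of the endomorphisms of the left factor. -/
noncomputable def tensorEndLeft :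
    Module.End Λ M →+* Module.End (Λ ⊗[K] Γ) (M ⊗[K] N) where
  toFun e := tensorEnd e 1
  map_one' := end_tensorProduct_ext fun m n ↦ by simp
  map_mul' e e' := end_tensorProduct_ext fun m n ↦ by simp
  map_zero' := end_tensorProduct_ext fun m n ↦ by simp
  map_add' e e' := end_tensorProduct_ext fun m n ↦ by simp [TensorProduct.add_tmul]

/-- The action `h ↦ id ⊗ h` of the endomorphisms of the right factor. -/
noncomputable def tensorEndRight :
    Module.End Γ N →+* Module.End (Λ ⊗[K] Γ) (M ⊗[K] N) where
  toFun h := tensorEnd 1 h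
  map_one' := end_tensorProduct_ext fun m n ↦ by simp
  map_mul' h h' := end_tensorProduct_ext fun m n ↦ by simp
  map_zero' := end_tensorProduct_ext fun m n ↦ by simp
  map_add' h h' := end_tensorProduct_ext fun m n ↦ by simp [TensorProduct.tmul_add]

lemma tensorEndLeft_injective [Nontrivial N] :
    Function.Injective
      (tensorEndLeft : Module.End Λ M →+* Module.End (Λ ⊗[K] Γ) (M ⊗[K] N)) := by
  refine (injective_iff_map_eq_zero _).2 fun e he ↦ LinearMap.restrictScalars_injective K ?_
  refine (Module.FaithfullyFlat.zero_iff_rTensor_zero K N _).2 (TensorProduct.ext' fun m n ↦ ?_)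
  exact LinearMap.congr_fun he (m ⊗ₜ n)

lemma tensorEndRight_injective [Nontrivial M] :
    Function.Injective
      (tensorEndRight : Module.End Γ N →+* Module.End (Λ ⊗[K] Γ) (M ⊗[K] N)) := by
  refine (injective_iff_map_eq_zero _).2 fun h hh ↦ LinearMap.restrictScalars_injective K ?_
  refine (Module.FaithfullyFlat.zero_iff_lTensor_zero K M _).2 (TensorProduct.ext' fun m n ↦ ?_)
  exact LinearMap.congr_fun hh (m ⊗ₜ n)

theorem IsIndecomposableModule.tensorProduct [IsAlgClosed K] [FiniteDimensional K M]
    (hM : IsIndecomposableModule Λ M) (hN : IsIndecomposableModule Γ N) :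
    IsIndecomposableModule (Λ ⊗[K] Γ) (M ⊗[K] N) := by
  have : Nontrivial M := hM.1
  have : Nontrivial N := hN.1
  have : IsNoetherian (Module.End Λ M) M := isNoetherian_of_tower K inferInstance
  have : IsNoetherian Λ M := isNoetherian_of_tower K inferInstance
  have : IsArtinian Λ M := isArtinian_of_tower K inferInstance
  obtain ⟨m, hm0, hscalar⟩ := hM.exists_common_eigenvector K
  have hmem (a : Module.End Λ M) (ha : a m = 0) : a ∈ Ring.jacobson (Module.End Λ M) :=
    hM.mem_ringJacobson_of_apply_eq_zero hm0 ha
  refine ⟨inferInstance, fun P Q hPQ ↦ ?_⟩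
  have hslice := isCompl_tensorSlice hPQ hm0 hscalar
  rcases hN.2 _ _ hslice with hP | hQ
  · exact .inl (eq_bot_of_tensorSlice_eq_top hPQ hmem (eq_top_of_bot_isCompl (hP ▸ hslice)))
  · exact .inr (eq_bot_of_tensorSlice_eq_top hPQ.symm hmem (eq_top_of_isCompl_bot (hQ ▸ hslice)))

end Tensor

theorem isIndecomposable_tensorProduct_iff_general
    (K Λ Γ M N : Type*) [Field K] [IsAlgClosed K] [Ring Λ] [Ring Γ]
    [Algebra K Λ] [Algebra K Γ]
    [AddCommGroup M] [Module K M] [Module Λ M] [IsScalarTower K Λ M] [FiniteDimensional K M]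
    [AddCommGroup N] [Module K N] [Module Γ N] [IsScalarTower K Γ N] :
    (IsIndecomposableModule Λ M ∧ IsIndecomposableModule Γ N) ↔
      IsIndecomposableModule (Λ ⊗[K] Γ) (M ⊗[K] N) := by
  refine ⟨fun ⟨hM, hN⟩ ↦ hM.tensorProduct hN, fun h ↦ ?_⟩
  have : Nontrivial (M ⊗[K] N) := h.1
  have : Nontrivial M := not_subsingleton_iff_nontrivial.1 fun _ ↦
    not_subsingleton (M ⊗[K] N) inferInstance
  have : Nontrivial N := not_subsingleton_iff_nontrivial.1 fun _ ↦
    not_subsingleton (M ⊗[K] N) inferInstance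
  exact ⟨h.of_injective_ringHom tensorEndLeft tensorEndLeft_injective,
    h.of_injective_ringHom tensorEndRight tensorEndRight_injective⟩

open TensorProduct in
/-- For finite dimensional algebras `Λ`, `Γ` over an algebraically closed
field `K` and nonzero finitely generated modules `M` over `Λ` and `N` over `Γ`:
`M` and `N` are both indecomposable iff `M ⊗[K] N` is an indecomposable `(Λ⊗Γ)`-module. -/
theorem isIndecomposable_tensorProduct_iff
    (K Λ Γ M N : Type*) [Field K] [IsAlgClosed K] [Ring Λ] [Ring Γ]
    [Algebra K Λ] [Algebra K Γ] [FiniteDimensional K Λ] [FiniteDimensional K Γ]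
    [AddCommGroup M] [Module K M] [Module Λ M] [IsScalarTower K Λ M] [Module.Finite Λ M]
    [Nontrivial M]
    [AddCommGroup N] [Module K N] [Module Γ N] [IsScalarTower K Γ N] [Module.Finite Γ N]
    [Nontrivial N] :
    (IsIndecomposableModule Λ M ∧ IsIndecomposableModule Γ N) ↔
      IsIndecomposableModule (Λ ⊗[K] Γ) (M ⊗[K] N) := by
  have : FiniteDimensional K M := Module.Finite.trans Λ M
  exact isIndecomposable_tensorProduct_iff_general K Λ Γ M N
end

section
/- Let Λ and Γ be finite dimensional algebras over an algebraically closed field K, let P_Λ, I_Λ be nonzero finitely generated left Λ-modules and P_Γ, I_Γ nonzero finitely generated left Γ-modules. Then: (1) P_Λ and P_Γ are projective modules if and only if P_Λ⊗P_Γ is a projective (Λ⊗Γ)-module; (2) I_Λ and I_Γ are injective modules if and only if I_Λ⊗I_Γ is an injective (Λ⊗Γ)-module. -/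
open TensorProduct

/-!
Over a field, a functional `φ` on `N'` and a vector `n : N` turn every `(A ⊗ B)`-linear map
`F : M ⊗ N → M' ⊗ N'` into an `A`-linear map `m ↦ (id ⊗ φ) (F (m ⊗ n))`.  Choosing `φ n = 1`, a
lifting or extension problem for `M` is solved by tensoring it with `N`, solving it there, and
slicing the solution; so `M` inherits projectivity and injectivity from `M ⊗ N`.

Conversely, a tensor product of free modules is free, and projective modules are the retracts of
free ones.  Dually, `Hom_K(A, V)` is an injective `A`-module, every injective `M` is a retract of
`Hom_K(A, M)`, and for finite dimensional algebras
`Hom_K(A, M) ⊗ Hom_K(B, N) ≃ Hom_K(A ⊗ B, M ⊗ N)`.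
-/

universe u

section TensorTensorMap

variable {K A B L M N L' M' N' Y : Type*} [Field K] [Ring A] [Ring B] [Algebra K A] [Algebra K B]
  [AddCommGroup M] [Module K M] [Module A M] [IsScalarTower K A M]
  [AddCommGroup N] [Module K N] [Module B N] [IsScalarTower K B N]
  [AddCommGroup L] [Module K L] [Module A L] [IsScalarTower K A L]
  [AddCommGroup L'] [Module K L'] [Module B L'] [IsScalarTower K B L']
  [AddCommGroup M'] [Module K M'] [Module A M'] [IsScalarTower K A M']
  [AddCommGroup N'] [Module K N'] [Module B N'] [IsScalarTower K B N']

lemma map_smul_of_map_smul_tmul_smul [AddCommGroup Y] [Module K Y] [Module (A ⊗[K] B) Y]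
    (f : M ⊗[K] N →ₗ[K] Y)
    (hf : ∀ (a : A) (b : B) m n, f ((a • m) ⊗ₜ (b • n)) = (a ⊗ₜ[K] b) • f (m ⊗ₜ n))
    (c : A ⊗[K] B) (x : M ⊗[K] N) : f (c • x) = c • f x := by
  induction c with
  | zero => simp
  | add c d hc hd => simp only [add_smul, map_add, hc, hd]
  | tmul a b =>
    induction x with
    | zero => simp
    | add x y hx hy => simp only [smul_add, map_add, hx, hy]
    | tmul m n => rw [tensorTensor_smul_tmul, hf]

/-- The `(A ⊗ B)`-linear map `f ⊗ g : M ⊗ N → M' ⊗ N'` induced by an `A`-linear map `f` and a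
`B`-linear map `g`. -/
noncomputable def tensorTensorMap (f : M →ₗ[A] M') (g : N →ₗ[B] N') :
    M ⊗[K] N →ₗ[A ⊗[K] B] M' ⊗[K] N' where
  __ := TensorProduct.map (f.restrictScalars K) (g.restrictScalars K)
  map_smul' := map_smul_of_map_smul_tmul_smul
    (TensorProduct.map (f.restrictScalars K) (g.restrictScalars K))
    fun a b m n ↦ by simp [tensorTensor_smul_tmul]

@[simp]
lemma tensorTensorMap_tmul (f : M →ₗ[A] M') (g : N →ₗ[B] N') (m : M) (n : N) :
    tensorTensorMap (K := K) f g (m ⊗ₜ n) = f m ⊗ₜ g n :=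
  rfl

lemma tensorTensorMap_comp_eq_id {f : M →ₗ[A] M'} {f' : M' →ₗ[A] M} {g : N →ₗ[B] N'}
    {g' : N' →ₗ[B] N} (hf : f' ∘ₗ f = LinearMap.id) (hg : g' ∘ₗ g = LinearMap.id) :
    tensorTensorMap (K := K) f' g' ∘ₗ tensorTensorMap f g = LinearMap.id := by
  ext x
  induction x with
  | zero => simp
  | add x y hx hy => rw [map_add, map_add, hx, hy]
  | tmul m n =>
    simp [show f' (f m) = m from LinearMap.congr_fun hf m,
      show g' (g n) = n from LinearMap.congr_fun hg n]

/-- The left slice `m ↦ (id ⊗ φ) (F (m ⊗ n))` of a map `F : M ⊗ N → M' ⊗ N'` at a vector `n : N`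
and a functional `φ` on `N'`, as an `A`-linear map. -/
noncomputable def leftSlice (n : N) (φ : Module.Dual K N')
    (F : M ⊗[K] N →ₗ[A ⊗[K] B] M' ⊗[K] N') : M →ₗ[A] M' where
  toFun m := TensorProduct.rid K M' (φ.lTensor M' (F (m ⊗ₜ n)))
  map_add' m₁ m₂ := by simp [TensorProduct.add_tmul]
  map_smul' a m := by
    have hF : F ((a • m) ⊗ₜ n) = (a ⊗ₜ[K] (1 : B)) • F (m ⊗ₜ n) := by
      rw [← map_smul, tensorTensor_smul_tmul, one_smul]
    rw [hF, RingHom.id_apply]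
    induction F (m ⊗ₜ n) with
    | zero => simp
    | add x y hx hy => simp only [smul_add, map_add, hx, hy]
    | tmul m' n' => simp [tensorTensor_smul_tmul, smul_comm a (φ n')]

lemma leftSlice_apply (n : N) (φ : Module.Dual K N') (F : M ⊗[K] N →ₗ[A ⊗[K] B] M' ⊗[K] N')
    (m : M) : leftSlice n φ F m = TensorProduct.rid K M' (φ.lTensor M' (F (m ⊗ₜ n))) :=
  rfl

lemma leftSlice_tensorTensorMap (n : N) (φ : Module.Dual K N') (f : M →ₗ[A] M')
    (g : N →ₗ[B] N') : leftSlice n φ (tensorTensorMap f g) = φ (g n) • f := by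
  ext m
  simp [leftSlice_apply]

lemma leftSlice_comp_tensorTensorMap_id (n : N) (φ : Module.Dual K N')
    (F : M ⊗[K] N →ₗ[A ⊗[K] B] M' ⊗[K] N') (f : L →ₗ[A] M) :
    leftSlice n φ (F ∘ₗ tensorTensorMap f LinearMap.id) = leftSlice n φ F ∘ₗ f :=
  rfl

lemma leftSlice_tensorTensorMap_id_comp (n : N) (φ : Module.Dual K N')
    (f : M' →ₗ[A] L) (F : M ⊗[K] N →ₗ[A ⊗[K] B] M' ⊗[K] N') :
    leftSlice n φ (tensorTensorMap f LinearMap.id ∘ₗ F) = f ∘ₗ leftSlice n φ F := by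
  ext m
  simp only [leftSlice_apply, LinearMap.comp_apply]
  induction F (m ⊗ₜ n) with
  | zero => simp
  | add x y hx hy => simp only [map_add, hx, hy]
  | tmul m' n' => simp

/-- The right slice `n ↦ (φ ⊗ id) (F (m ⊗ n))` of a map `F : M ⊗ N → M' ⊗ N'` at a vector `m : M`
and a functional `φ` on `M'`, as a `B`-linear map. -/
noncomputable def rightSlice (m : M) (φ : Module.Dual K M')
    (F : M ⊗[K] N →ₗ[A ⊗[K] B] M' ⊗[K] N') : N →ₗ[B] N' where
  toFun n := TensorProduct.lid K N' (φ.rTensor N' (F (m ⊗ₜ n)))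
  map_add' n₁ n₂ := by simp [TensorProduct.tmul_add]
  map_smul' b n := by
    have hF : F (m ⊗ₜ (b • n)) = ((1 : A) ⊗ₜ[K] b) • F (m ⊗ₜ n) := by
      rw [← map_smul, tensorTensor_smul_tmul, one_smul]
    rw [hF, RingHom.id_apply]
    induction F (m ⊗ₜ n) with
    | zero => simp
    | add x y hx hy => simp only [smul_add, map_add, hx, hy]
    | tmul m' n' => simp [tensorTensor_smul_tmul, smul_comm b (φ m')]

lemma rightSlice_apply (m : M) (φ : Module.Dual K M') (F : M ⊗[K] N →ₗ[A ⊗[K] B] M' ⊗[K] N')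
    (n : N) : rightSlice m φ F n = TensorProduct.lid K N' (φ.rTensor N' (F (m ⊗ₜ n))) :=
  rfl

lemma rightSlice_tensorTensorMap (m : M) (φ : Module.Dual K M') (f : M →ₗ[A] M')
    (g : N →ₗ[B] N') : rightSlice m φ (tensorTensorMap f g) = φ (f m) • g := by
  ext n
  simp [rightSlice_apply]

lemma rightSlice_comp_tensorTensorMap_id (m : M) (φ : Module.Dual K M')
    (F : M ⊗[K] N →ₗ[A ⊗[K] B] M' ⊗[K] N') (g : L' →ₗ[B] N) :
    rightSlice m φ (F ∘ₗ tensorTensorMap LinearMap.id g) = rightSlice m φ F ∘ₗ g :=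
  rfl

lemma rightSlice_tensorTensorMap_id_comp (m : M) (φ : Module.Dual K M')
    (g : N' →ₗ[B] L') (F : M ⊗[K] N →ₗ[A ⊗[K] B] M' ⊗[K] N') :
    rightSlice m φ (tensorTensorMap LinearMap.id g ∘ₗ F) = g ∘ₗ rightSlice m φ F := by
  ext n
  simp only [rightSlice_apply, LinearMap.comp_apply]
  induction F (m ⊗ₜ n) with
  | zero => simp
  | add x y hx hy => simp only [map_add, hx, hy]
  | tmul m' n' => simp

variable (K N) in
lemma exists_dual_apply_eq_one [Nontrivial N] : ∃ (n : N) (φ : Module.Dual K N), φ n = 1 :=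
  have ⟨n, hn⟩ := exists_ne (0 : N)
  ⟨n, Module.Projective.exists_dual_eq_one K hn⟩

end TensorTensorMap

section Projective

variable {K A B M N : Type*} [Field K] [Ring A] [Ring B] [Algebra K A] [Algebra K B]
  [AddCommGroup M] [Module K M] [Module A M] [IsScalarTower K A M]
  [AddCommGroup N] [Module K N] [Module B N] [IsScalarTower K B N]

/-- The basis `b i ⊗ c j` of the `(A ⊗ B)`-module `M ⊗ N`, for a basis `b` of the `A`-module `M`
and a basis `c` of the `B`-module `N`. -/
noncomputable def tensorTensorBasis {ι κ : Type*} (b : Module.Basis ι A M)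
    (c : Module.Basis κ B N) : Module.Basis (ι × κ) (A ⊗[K] B) (M ⊗[K] N) :=
  let e : M ⊗[K] N ≃ₗ[K] ι × κ →₀ A ⊗[K] B :=
    TensorProduct.congr (b.repr.restrictScalars K) (c.repr.restrictScalars K) ≪≫ₗ
      finsuppTensorFinsupp K K A B ι κ
  .ofRepr <| e.toAddEquiv.toLinearEquiv <| map_smul_of_map_smul_tmul_smul e.toLinearMap
    fun a a' m n ↦ by
      ext ⟨i, j⟩
      simp [e]

variable (K A B M N) in
lemma module_free_tensorProduct [Module.Free A M] [Module.Free B N] :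
    Module.Free (A ⊗[K] B) (M ⊗[K] N) :=
  .of_basis (tensorTensorBasis (Module.Free.chooseBasis A M) (Module.Free.chooseBasis B N))

variable (K) in
theorem projective_tensorProduct (hM : Module.Projective A M) (hN : Module.Projective B N) :
    Module.Projective (A ⊗[K] B) (M ⊗[K] N) :=
  have ⟨_, hs⟩ := Module.projective_def'.mp hM
  have ⟨_, ht⟩ := Module.projective_def'.mp hN
  have := module_free_tensorProduct K A B (M →₀ A) (N →₀ B)
  .of_split _ _ (tensorTensorMap_comp_eq_id hs ht)

theorem projective_left_of_tensorProduct [Nontrivial N]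
    (h : Module.Projective (A ⊗[K] B) (M ⊗[K] N)) : Module.Projective A M := by
  obtain ⟨n, φ, hφ⟩ := exists_dual_apply_eq_one K N
  refine .of_lifting_property'' fun p hp ↦ ?_
  obtain ⟨F, hF⟩ := Module.projective_lifting_property
    (tensorTensorMap (K := K) p (LinearMap.id : N →ₗ[B] N))
    (tensorTensorMap LinearMap.id LinearMap.id) (LinearMap.rTensor_surjective N hp)
  exact ⟨leftSlice n φ F, by
    rw [← leftSlice_tensorTensorMap_id_comp, hF, leftSlice_tensorTensorMap, LinearMap.id_apply, hφ,
      one_smul]⟩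

theorem projective_right_of_tensorProduct [Nontrivial M]
    (h : Module.Projective (A ⊗[K] B) (M ⊗[K] N)) : Module.Projective B N := by
  obtain ⟨m, φ, hφ⟩ := exists_dual_apply_eq_one K M
  refine .of_lifting_property'' fun p hp ↦ ?_
  obtain ⟨F, hF⟩ := Module.projective_lifting_property
    (tensorTensorMap (K := K) (LinearMap.id : M →ₗ[A] M) p)
    (tensorTensorMap LinearMap.id LinearMap.id) (LinearMap.lTensor_surjective M hp)
  exact ⟨rightSlice m φ F, by
    rw [← rightSlice_tensorTensorMap_id_comp, hF, rightSlice_tensorTensorMap, LinearMap.id_apply,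
      hφ, one_smul]⟩

variable (K A B M N) in
theorem projective_tensorProduct_iff [Nontrivial M] [Nontrivial N] :
    (Module.Projective A M ∧ Module.Projective B N) ↔
      Module.Projective (A ⊗[K] B) (M ⊗[K] N) :=
  ⟨fun h ↦ projective_tensorProduct K h.1 h.2,
    fun h ↦ ⟨projective_left_of_tensorProduct h, projective_right_of_tensorProduct h⟩⟩

end Projective

section Coinduced

variable {K A B V W M : Type*} [Field K] [Ring A] [Ring B] [Algebra K A] [Algebra K B]
  [AddCommGroup V] [Module K V] [AddCommGroup W] [Module K W]
  [AddCommGroup M] [Module K M] [Module A M] [IsScalarTower K A M]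

variable (K A V) in
/-- The `A`-module `Hom_K(A, V)` coinduced from a vector space `V`, with `(a • f) b = f (b * a)`.
It is a type synonym because `A →ₗ[K] V` may already carry an action of `A` through `V`. -/
def Coinduced : Type _ := A →ₗ[K] V

namespace Coinduced

noncomputable instance : AddCommGroup (Coinduced K A V) :=
  inferInstanceAs (AddCommGroup (A →ₗ[K] V))

noncomputable instance : Module K (Coinduced K A V) :=
  inferInstanceAs (Module K (A →ₗ[K] V))

instance : FunLike (Coinduced K A V) A V :=
  inferInstanceAs (FunLike (A →ₗ[K] V) A V)

instance : LinearMapClass (Coinduced K A V) K A V :=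
  inferInstanceAs (LinearMapClass (A →ₗ[K] V) K A V)

@[ext]
lemma ext {f g : Coinduced K A V} (h : ∀ a, f a = g a) : f = g :=
  DFunLike.ext f g h

noncomputable instance : Module A (Coinduced K A V) where
  smul a f := LinearMap.comp (f : A →ₗ[K] V) (LinearMap.mulRight K a)
  one_smul f := ext fun b ↦ congrArg f (mul_one b)
  mul_smul a a' f := ext fun b ↦ congrArg f (mul_assoc b a a').symm
  smul_zero _ := rfl
  smul_add _ _ _ := rfl
  add_smul a a' f := ext fun b ↦ (congrArg f (mul_add b a a')).trans (map_add f _ _)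
  zero_smul f := ext fun b ↦ (congrArg f (mul_zero b)).trans (map_zero f)

lemma smul_apply (a : A) (f : Coinduced K A V) (b : A) : (a • f) b = f (b * a) :=
  rfl

instance : IsScalarTower K A (Coinduced K A V) where
  smul_assoc c a f := ext fun b ↦
    (congrArg f (Algebra.mul_smul_comm c b a)).trans (map_smul f c _)

-- Evaluation at `1` identifies `A`-linear maps into `Hom_K(A, V)` with `K`-linear maps into `V`,
-- and the latter extend along any inclusion of vector spaces.
lemma baer : Module.Baer A (Coinduced K A V) := by
  intro L g
  let evalOne : L.restrictScalars K →ₗ[K] V :=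
    { toFun x := g x 1
      map_add' x y := congrArg (· 1) (map_add g x y)
      map_smul' c x := congrArg (· 1) ((g.restrictScalars K).map_smul c x) }
  obtain ⟨F, hF⟩ := LinearMap.exists_extend evalOne
  refine ⟨LinearMap.toSpanSingleton A (Coinduced K A V) F, fun x hx ↦ ext fun b ↦ ?_⟩
  calc F (b * x) = g (b • ⟨x, hx⟩) 1 := LinearMap.congr_fun hF ⟨b * x, L.mul_mem_left b hx⟩
    _ = g ⟨x, hx⟩ b := by rw [map_smul, smul_apply, one_mul]

variable (K A M) in
/-- The embedding `m ↦ (a ↦ a • m)` of an `A`-module into the module coinduced from its underlying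
vector space: the unit of the adjunction between restriction to `K` and coinduction. -/
noncomputable def unit : M →ₗ[A] Coinduced K A M where
  toFun m := (LinearMap.toSpanSingleton A M m).restrictScalars K
  map_add' m₁ m₂ := ext fun a ↦ smul_add a m₁ m₂
  map_smul' a m := ext fun b ↦ (mul_smul b a m).symm

lemma unit_apply (m : M) (a : A) : unit K A M m a = a • m :=
  rfl

lemma unit_injective : Function.Injective (unit K A M) := fun m m' h ↦ by
  simpa [unit_apply] using DFunLike.congr_fun h 1

variable (K A B V W) in
/-- The isomorphism `Hom_K(A, V) ⊗ Hom_K(B, W) ≃ Hom_K(A ⊗ B, V ⊗ W)` of `(A ⊗ B)`-modules for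
finite dimensional algebras `A` and `B`. -/
noncomputable def tensorEquiv [FiniteDimensional K A] [FiniteDimensional K B] :
    Coinduced K A V ⊗[K] Coinduced K B W ≃ₗ[A ⊗[K] B] Coinduced K (A ⊗[K] B) (V ⊗[K] W) :=
  let e : Coinduced K A V ⊗[K] Coinduced K B W ≃ₗ[K] Coinduced K (A ⊗[K] B) (V ⊗[K] W) :=
    homTensorHomEquiv K A B V W
  have e_tmul_apply (f : Coinduced K A V) (g : Coinduced K B W) (a : A) (b : B) :
      e (f ⊗ₜ g) (a ⊗ₜ b) = f a ⊗ₜ g b :=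
    LinearMap.congr_fun (homTensorHomEquiv_apply (R := K) (M := A) (N := B) (P := V) (Q := W) _) _
  e.toAddEquiv.toLinearEquiv <| map_smul_of_map_smul_tmul_smul e.toLinearMap fun a b f g ↦
    TensorProduct.ext' fun a' b' ↦
      calc e ((a • f) ⊗ₜ (b • g)) (a' ⊗ₜ b')
        _ = f (a' * a) ⊗ₜ g (b' * b) := e_tmul_apply _ _ _ _
        _ = e (f ⊗ₜ g) ((a' ⊗ₜ b') * (a ⊗ₜ b)) := by
          rw [Algebra.TensorProduct.tmul_mul_tmul, e_tmul_apply]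

end Coinduced

end Coinduced

section Injective

variable {K A B M N : Type*} [Field K] [Ring A] [Ring B] [Algebra K A] [Algebra K B]
  [AddCommGroup M] [Module K M] [Module A M] [IsScalarTower K A M]
  [AddCommGroup N] [Module K N] [Module B N] [IsScalarTower K B N]

lemma baer_of_split {R P Q : Type*} [Ring R] [AddCommGroup P] [Module R P] [AddCommGroup Q]
    [Module R Q] (hQ : Module.Baer R Q) (i : P →ₗ[R] Q) (r : Q →ₗ[R] P)
    (hri : r ∘ₗ i = LinearMap.id) : Module.Baer R P := fun L g ↦
  have ⟨F, hF⟩ := hQ L (i ∘ₗ g)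
  ⟨r ∘ₗ F, fun x hx ↦ (congrArg r (hF x hx)).trans (LinearMap.congr_fun hri _)⟩

variable (K) in
theorem baer_tensorProduct [FiniteDimensional K A] [FiniteDimensional K B]
    (hM : Module.Baer A M) (hN : Module.Baer B N) : Module.Baer (A ⊗[K] B) (M ⊗[K] N) := by
  obtain ⟨r, hr⟩ := hM.extension_property (Coinduced.unit K A M) Coinduced.unit_injective .id
  obtain ⟨s, hs⟩ := hN.extension_property (Coinduced.unit K B N) Coinduced.unit_injective .id
  have baer_coinduced : Module.Baer (A ⊗[K] B) (Coinduced K A M ⊗[K] Coinduced K B N) :=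
    .of_equiv (Coinduced.tensorEquiv K A B M N).symm Coinduced.baer
  exact baer_of_split baer_coinduced _ _ (tensorTensorMap_comp_eq_id hr hs)

theorem injective_left_of_tensorProduct [Nontrivial N]
    (h : Module.Injective (A ⊗[K] B) (M ⊗[K] N)) : Module.Injective A M where
  out X Y _ _ _ _ i hi f := by
    let : Module K X := .compHom X (algebraMap K A)
    let : Module K Y := .compHom Y (algebraMap K A)
    have : IsScalarTower K A X := .of_algebraMap_smul fun _ _ ↦ rfl
    have : IsScalarTower K A Y := .of_algebraMap_smul fun _ _ ↦ rfl
    obtain ⟨n, φ, hφ⟩ := exists_dual_apply_eq_one K N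
    obtain ⟨F, hF⟩ := h.out (tensorTensorMap (K := K) i (LinearMap.id : N →ₗ[B] N))
      (Module.Flat.rTensor_preserves_injective_linearMap (i.restrictScalars K) hi)
      (tensorTensorMap f LinearMap.id)
    have slice_comp : leftSlice n φ F ∘ₗ i = f := by
      rw [← leftSlice_comp_tensorTensorMap_id, LinearMap.ext (f := _ ∘ₗ _) hF,
        leftSlice_tensorTensorMap, LinearMap.id_apply, hφ, one_smul]
    exact ⟨leftSlice n φ F, LinearMap.congr_fun slice_comp⟩

theorem injective_right_of_tensorProduct [Nontrivial M]
    (h : Module.Injective (A ⊗[K] B) (M ⊗[K] N)) : Module.Injective B N where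
  out X Y _ _ _ _ i hi f := by
    let : Module K X := .compHom X (algebraMap K B)
    let : Module K Y := .compHom Y (algebraMap K B)
    have : IsScalarTower K B X := .of_algebraMap_smul fun _ _ ↦ rfl
    have : IsScalarTower K B Y := .of_algebraMap_smul fun _ _ ↦ rfl
    obtain ⟨m, φ, hφ⟩ := exists_dual_apply_eq_one K M
    obtain ⟨F, hF⟩ := h.out (tensorTensorMap (K := K) (LinearMap.id : M →ₗ[A] M) i)
      (Module.Flat.lTensor_preserves_injective_linearMap (i.restrictScalars K) hi)
      (tensorTensorMap LinearMap.id f)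
    have slice_comp : rightSlice m φ F ∘ₗ i = f := by
      rw [← rightSlice_comp_tensorTensorMap_id, LinearMap.ext (f := _ ∘ₗ _) hF,
        rightSlice_tensorTensorMap, LinearMap.id_apply, hφ, one_smul]
    exact ⟨rightSlice m φ F, LinearMap.congr_fun slice_comp⟩

lemma small_of_finiteDimensional (K V : Type*) (W : Type u) [Field K] [AddCommGroup V] [Module K V]
    [FiniteDimensional K V] [AddCommGroup W] [Module K W] [Nontrivial W] : Small.{u} V :=
  have ⟨_, hw⟩ := exists_ne (0 : W)
  have : Small.{u} K := small_of_injective (smul_left_injective K hw)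
  Module.Finite.small K V

variable (K A B M N) in
theorem injective_tensorProduct_iff [FiniteDimensional K A] [FiniteDimensional K B] [Nontrivial M]
    [Nontrivial N] :
    (Module.Injective A M ∧ Module.Injective B N) ↔
      Module.Injective (A ⊗[K] B) (M ⊗[K] N) := by
  have := small_of_finiteDimensional K A M
  have := small_of_finiteDimensional K B N
  exact ⟨fun h ↦ (baer_tensorProduct K (.of_injective h.1) (.of_injective h.2)).injective,
    fun h ↦ ⟨injective_left_of_tensorProduct h, injective_right_of_tensorProduct h⟩⟩

end Injective

theorem projective_injective_tensorProduct_iff_general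
    (K Λ Γ P Q I J : Type*) [Field K] [Ring Λ] [Ring Γ] [Algebra K Λ] [Algebra K Γ]
    [AddCommGroup P] [Module K P] [Module Λ P] [IsScalarTower K Λ P] [Nontrivial P]
    [AddCommGroup Q] [Module K Q] [Module Γ Q] [IsScalarTower K Γ Q] [Nontrivial Q]
    [AddCommGroup I] [Module K I] [Module Λ I] [IsScalarTower K Λ I] [Nontrivial I]
    [AddCommGroup J] [Module K J] [Module Γ J] [IsScalarTower K Γ J] [Nontrivial J] :
    ((Module.Projective Λ P ∧ Module.Projective Γ Q) ↔
        Module.Projective (Λ ⊗[K] Γ) (P ⊗[K] Q)) ∧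
      (∀ [FiniteDimensional K Λ] [FiniteDimensional K Γ],
        (Module.Injective Λ I ∧ Module.Injective Γ J) ↔
          Module.Injective (Λ ⊗[K] Γ) (I ⊗[K] J)) :=
  ⟨projective_tensorProduct_iff K Λ Γ P Q, injective_tensorProduct_iff K Λ Γ I J⟩

open TensorProduct in
/-- For finite dimensional algebras `Λ`, `Γ` over an algebraically closed
field `K` and nonzero finitely generated modules: (1) `P_Λ ⊗ P_Γ` is a projective
`(Λ⊗Γ)`-module iff `P_Λ` and `P_Γ` are projective; (2) `I_Λ ⊗ I_Γ` is an injective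
`(Λ⊗Γ)`-module iff `I_Λ` and `I_Γ` are injective. -/
theorem projective_injective_tensorProduct_iff
    (K Λ Γ P Q I J : Type*) [Field K] [IsAlgClosed K] [Ring Λ] [Ring Γ]
    [Algebra K Λ] [Algebra K Γ] [FiniteDimensional K Λ] [FiniteDimensional K Γ]
    [AddCommGroup P] [Module K P] [Module Λ P] [IsScalarTower K Λ P] [Module.Finite Λ P]
    [Nontrivial P]
    [AddCommGroup Q] [Module K Q] [Module Γ Q] [IsScalarTower K Γ Q] [Module.Finite Γ Q]
    [Nontrivial Q]
    [AddCommGroup I] [Module K I] [Module Λ I] [IsScalarTower K Λ I] [Module.Finite Λ I]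
    [Nontrivial I]
    [AddCommGroup J] [Module K J] [Module Γ J] [IsScalarTower K Γ J] [Module.Finite Γ J]
    [Nontrivial J] :
    ((Module.Projective Λ P ∧ Module.Projective Γ Q) ↔
        Module.Projective (Λ ⊗[K] Γ) (P ⊗[K] Q)) ∧
      ((Module.Injective Λ I ∧ Module.Injective Γ J) ↔
        Module.Injective (Λ ⊗[K] Γ) (I ⊗[K] J)) := by
  have ⟨projective_iff, injective_iff⟩ :=
    projective_injective_tensorProduct_iff_general K Λ Γ P Q I J
  exact ⟨projective_iff, injective_iff⟩
end
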